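/- Assume 2^ℵ₀ = ℵ₂. If (B_i)_{i ∈ I} is a family of pairwise disjoint nonempty Borel subsets of ℝ whose union is ℝ and each B_i is closed under addition, then the cardinality of I belongs to {1, 2, 3, ℵ₁, ℵ₂}. -/

import Mathlib

/-!
Countably many pieces cannot all be meagre on an open half-line, so by Piccard's sum theorem the
trace of one of them on the half-line, being closed under addition, contains an interval. A piece
containing `n • x` with `n ≠ 0` contains `x`, because the piece of `x` also contains `n • x`; hence
pieces are stable under positive rational scaling, and rational multiples of any point of the
half-line enter the interval. So a countable partition puts each open half-line in one piece.
-/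

open Cardinal Filter Set Topology
open scoped Pointwise

lemma eq_aleph_or_eq_aleph_add_one {o : Ordinal} {c : Cardinal} (hle : ℵ_ o ≤ c)
    (hle' : c ≤ ℵ_ (o + 1)) : c = ℵ_ o ∨ c = ℵ_ (o + 1) := by
  rw [← succ_aleph, Order.le_succ_iff_eq_or_le] at hle'
  rw [← succ_aleph]
  exact hle'.symm.imp_left (·.antisymm hle)

lemma continuum_eq_aleph_natCast_congr_universe.{u, v} {n : ℕ} (h : 𝔠 = ℵ_ (n : Ordinal.{u})) :
    𝔠 = ℵ_ (n : Ordinal.{v}) := by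
  apply lift_injective.{u}
  simpa using congrArg lift.{v} h

lemma eq_aleph_one_or_eq_aleph_two_of_continuum_eq.{u, v} (hc : 𝔠 = ℵ_ (2 : Ordinal.{u}))
    {c : Cardinal.{v}} (hle : ℵ₁ ≤ c) (hle' : c ≤ 𝔠) : c = ℵ₁ ∨ c = ℵ_ 2 := by
  have hc' : 𝔠 = ℵ_ (2 : Ordinal.{v}) := by
    exact_mod_cast continuum_eq_aleph_natCast_congr_universe (n := 2) (mod_cast hc)
  rw [← one_add_one_eq_two] at hc' ⊢
  exact eq_aleph_or_eq_aleph_add_one hle (hle'.trans_eq hc')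

section Piccard

variable {G : Type*} [Group G] [TopologicalSpace G] [IsTopologicalGroup G] [BaireSpace G]

@[to_additive]
lemma mul_subset_mul_of_residualEq {A B U V : Set G} (hU : IsOpen U) (hV : IsOpen V)
    (hA : A =ᶠ[residual G] U) (hB : B =ᶠ[residual G] V) : U * V ⊆ A * B := by
  rintro _ ⟨u, hu, v, hv, rfl⟩
  let φ : G ≃ₜ G := (Homeomorph.inv G).trans (Homeomorph.mulRight (u * v))
  have hφ (x : G) : φ x = x⁻¹ * (u * v) := rfl
  have hBφ := (tendsto_residual_of_isOpenMap φ.continuous φ.isOpenMap).eventually hB.mem_iff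
  have huW : u ∈ U ∩ φ ⁻¹' V := ⟨hu, by simpa [hφ] using hv⟩
  have hdense := dense_of_mem_residual (hA.mem_iff.and hBφ)
  obtain ⟨x, ⟨hxU, hxV⟩, hxA, hxB⟩ :=
    hdense.inter_open_nonempty _ (hU.inter (hV.preimage φ.continuous)) ⟨u, huW⟩
  exact ⟨x, hxA.mpr hxU, φ x, hxB.mpr hxV, by simp [hφ]⟩

@[to_additive]
lemma nonempty_interior_mul_of_not_isMeagre {A B : Set G}
    (hA : BaireMeasurableSet A) (hB : BaireMeasurableSet B)
    (hA' : ¬ IsMeagre A) (hB' : ¬ IsMeagre B) : (interior (A * B)).Nonempty := by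
  have nonempty_of_residualEq {S W : Set G} (hS : ¬ IsMeagre S) (hSW : S =ᶠ[residual G] W) :
      W.Nonempty := by
    rw [nonempty_iff_ne_empty]
    rintro rfl
    exact hS (eventuallyEq_empty.mp hSW)
  obtain ⟨U, hU, hAU⟩ := hA.residualEq_isOpen
  obtain ⟨V, hV, hBV⟩ := hB.residualEq_isOpen
  exact ((nonempty_of_residualEq hA' hAU).mul (nonempty_of_residualEq hB' hBV)).mono
    (interior_maximal (mul_subset_mul_of_residualEq hU hV hAU hBV) hU.mul_right)

end Piccard

/-- A partition of `M` into sets closed under addition, encoded by the function `f` that sends a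
point to the label of its piece; labels of empty pieces are allowed. -/
def HasAddClosedFibers {M ι : Type*} [Add M] (f : M → ι) : Prop :=
  ∀ ⦃x y⦄, f x = f y → f (x + y) = f x

namespace HasAddClosedFibers

variable {ι : Type*}

lemma map_nsmul {M : Type*} [AddMonoid M] {f : M → ι} (hf : HasAddClosedFibers f)
    {n : ℕ} (hn : n ≠ 0) (x : M) : f (n • x) = f x := by
  induction n, Nat.one_le_iff_ne_zero.mpr hn using Nat.le_induction with
  | base => rw [one_nsmul]
  | succ k hk ih =>
    have hkx := ih (Nat.one_le_iff_ne_zero.mp hk)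
    rw [succ_nsmul, hf hkx, hkx]

lemma map_nnrat_smul {M : Type*} [AddCommMonoid M] [Module ℚ≥0 M] {f : M → ι}
    (hf : HasAddClosedFibers f) {q : ℚ≥0} (hq : q ≠ 0) (x : M) : f (q • x) = f x :=
  calc
    f (q • x) = f (q.den • q • x) := (hf.map_nsmul q.den_ne_zero _).symm
    _ = f (q.num • x) := by
      rw [← Nat.cast_smul_eq_nsmul ℚ≥0, smul_smul, NNRat.den_mul_eq_num, Nat.cast_smul_eq_nsmul]
    _ = f x := hf.map_nsmul (NNRat.num_ne_zero.mpr hq) x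

lemma map_eq_of_smul_mem_isOpen {E : Type*} [AddCommGroup E] [Module ℝ E] [TopologicalSpace E]
    [ContinuousSMul ℝ E] {f : E → ι} (hf : HasAddClosedFibers f) {U : Set E} (hU : IsOpen U)
    {i : ι} (hi : ∀ u ∈ U, f u = i) {x : E} {r : ℝ} (hr : 0 < r) (hrx : r • x ∈ U) : f x = i := by
  have hW : IsOpen (Ioi 0 ∩ (fun t : ℝ => t • x) ⁻¹' U) :=
    isOpen_Ioi.inter (hU.preimage (continuous_id.smul continuous_const))
  obtain ⟨_, ⟨hq, hqx⟩, q, rfl⟩ :=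
    (Rat.denseRange_cast (𝕜 := ℝ)).inter_open_nonempty _ hW ⟨r, hr, hrx⟩
  let : Module ℚ≥0 E := Module.compHom E (algebraMap ℚ≥0 ℝ)
  lift q to ℚ≥0 using Rat.cast_nonneg.mp (mem_Ioi.mp hq).le
  have hq0 : q ≠ 0 := by
    rintro rfl
    simp at hq
  rw [← hf.map_nnrat_smul hq0 x]
  exact hi _ hqx

lemma exists_isOpen_subset_forall_eq {G : Type*} [AddGroup G] [TopologicalSpace G]
    [IsTopologicalAddGroup G] [BaireSpace G] [Countable ι] {f : G → ι}
    (hf : HasAddClosedFibers f) (hmeas : ∀ i, BaireMeasurableSet (f ⁻¹' {i})) {V : Set G}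
    (hV : IsOpen V) (hne : V.Nonempty) (hadd : V + V ⊆ V) :
    ∃ i, ∃ U ⊆ V, IsOpen U ∧ U.Nonempty ∧ ∀ u ∈ U, f u = i := by
  obtain ⟨i, hi⟩ : ∃ i, ¬ IsMeagre (V ∩ f ⁻¹' {i}) := by
    by_contra! h
    refine not_isMeagre_of_isOpen hV hne ((isMeagre_iUnion h).mono fun x hx => ?_)
    exact mem_iUnion.mpr ⟨f x, hx, rfl⟩
  set A := V ∩ f ⁻¹' {i}
  have hA : BaireMeasurableSet A := hV.baireMeasurableSet.inter (hmeas i)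
  have hAA : A + A ⊆ A := by
    rintro _ ⟨x, ⟨hxV, hxi⟩, y, ⟨hyV, hyi⟩, rfl⟩
    exact ⟨hadd (add_mem_add hxV hyV), (hf (hxi.trans hyi.symm)).trans hxi⟩
  have hU : interior (A + A) ⊆ A := interior_subset.trans hAA
  exact ⟨i, interior (A + A), fun u hu => (hU hu).1, isOpen_interior,
    nonempty_interior_add_of_not_isMeagre hA hA hi hi, fun u hu => (hU hu).2⟩

section Real

variable [Countable ι] {f : ℝ → ι}

lemma map_eq_of_mul_pos (hf : HasAddClosedFibers f)
    (hmeas : ∀ i, BaireMeasurableSet (f ⁻¹' {i})) {x y : ℝ} (hxy : 0 < x * y) : f x = f y := by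
  have hx : x ≠ 0 := left_ne_zero_of_mul hxy.ne'
  have hy : y ≠ 0 := right_ne_zero_of_mul hxy.ne'
  have hV : IsOpen {z : ℝ | 0 < x * z} := isOpen_lt continuous_const (continuous_const_mul x)
  have hadd : {z : ℝ | 0 < x * z} + {z | 0 < x * z} ⊆ {z | 0 < x * z} := by
    rintro _ ⟨z, hz, w, hw, rfl⟩
    simpa only [mem_ofPred_eq, mul_add] using add_pos hz hw
  obtain ⟨i, U, hUV, hU, ⟨u, hu⟩, hi⟩ := hf.exists_isOpen_subset_forall_eq hmeas hV ⟨y, hxy⟩ hadd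
  have eq_label {z : ℝ} (hz : z ≠ 0) (hxz : 0 < x * z) : f z = i := by
    refine hf.map_eq_of_smul_mem_isOpen hU hi (r := u / z) ?_ ?_
    · rw [← mul_div_mul_left u z hx]
      exact div_pos (hUV hu) hxz
    · rwa [smul_eq_mul, div_mul_cancel₀ u hz]
  rw [eq_label hx (mul_self_pos.mpr hx), eq_label hy hxy]

lemma map_sign (hf : HasAddClosedFibers f)
    (hmeas : ∀ i, BaireMeasurableSet (f ⁻¹' {i})) (x : ℝ) : f (SignType.sign x) = f x := by
  obtain rfl | hx := eq_or_ne x 0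
  · simp
  · refine hf.map_eq_of_mul_pos hmeas ?_
    rw [sign_mul_self]
    exact abs_pos.mpr hx

lemma finite_and_card_le_three_of_surjective (hf : HasAddClosedFibers f)
    (hmeas : ∀ i, BaireMeasurableSet (f ⁻¹' {i})) (hsurj : Function.Surjective f) :
    Finite ι ∧ Nat.card ι ≤ 3 := by
  have hsign : Function.Surjective fun s : SignType => f s := fun i => by
    obtain ⟨x, rfl⟩ := hsurj i
    exact ⟨SignType.sign x, hf.map_sign hmeas x⟩
  refine ⟨.of_surjective _ hsign, (Nat.card_le_card_of_surjective _ hsign).trans_eq ?_⟩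
  rw [Nat.card_eq_fintype_card]
  rfl

end Real

end HasAddClosedFibers

theorem stmt_15_general {ι : Type*} (B : ι → Set ℝ)
    (hmeas : ∀ i, BaireMeasurableSet (B i))
    (hne : ∀ i, (B i).Nonempty)
    (hdisj : Pairwise (Function.onFun Disjoint B))
    (hcover : (⋃ i, B i) = Set.univ)
    (hadd : ∀ i, ∀ x ∈ B i, ∀ y ∈ B i, x + y ∈ B i) :
    #ι = 1 ∨ #ι = 2 ∨ #ι = 3 ∨ ℵ₁ ≤ #ι ∧ #ι ≤ 𝔠 := by
  let P := IndexedPartition.mk' B hdisj hne (iUnion_eq_univ_iff.mp hcover)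
  have hfib (i : ι) : P.index ⁻¹' {i} = B i := (P.eq i).symm
  have hf : HasAddClosedFibers P.index := fun x y hxy =>
    P.mem_iff_index_eq.mp (hadd _ x (P.mem_index x) y (hxy ▸ P.mem_index y))
  have hsurj : Function.Surjective P.index := fun i => ⟨P.some i, P.index_some i⟩
  obtain hι | hι := le_or_gt #ι ℵ₀
  · have : Countable ι := mk_le_aleph0_iff.mp hι
    obtain ⟨_, hle⟩ := hf.finite_and_card_le_three_of_surjective (by simpa only [hfib]) hsurj
    have : Nonempty ι := ⟨P.index 0⟩
    have hpos : 0 < Nat.card ι := Nat.card_pos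
    rw [← Nat.cast_card]
    interval_cases Nat.card ι <;> simp
  · have hle : #ι ≤ 𝔠 := by
      simpa [mk_real] using lift_mk_le_lift_mk_of_surjective hsurj
    exact .inr <| .inr <| .inr ⟨succ_aleph0 ▸ Order.succ_le_of_lt hι, hle⟩

/-- Assume `2^ℵ₀ = ℵ₂`. If `ℝ` is partitioned into nonempty Borel sets closed under addition,
then the number of pieces belongs to `{1, 2, 3, ℵ₁, ℵ₂}`. -/
theorem stmt_15 (hc : Cardinal.continuum = Cardinal.aleph 2)
    {ι : Type} (B : ι → Set ℝ)
    (hmeas : ∀ i, MeasurableSet (B i))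
    (hne : ∀ i, (B i).Nonempty)
    (hdisj : Pairwise (Function.onFun Disjoint B))
    (hcover : (⋃ i, B i) = Set.univ)
    (hadd : ∀ i, ∀ x ∈ B i, ∀ y ∈ B i, x + y ∈ B i) :
    Cardinal.mk ι = 1 ∨ Cardinal.mk ι = 2 ∨ Cardinal.mk ι = 3 ∨
      Cardinal.mk ι = Cardinal.aleph 1 ∨ Cardinal.mk ι = Cardinal.aleph 2 := by
  have h := stmt_15_general B (fun i => (hmeas i).baireMeasurableSet) hne hdisj hcover hadd
  exact h.imp_right <| .imp_right <| .imp_right fun hι =>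
    eq_aleph_one_or_eq_aleph_two_of_continuum_eq hc hι.1 hι.2
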